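/- Assume additionally λ₁ < 0, λ₂ > 0, α₂ < 4 < α₃, and let θ be a real number with 4/α₃ < θ < 1. Let M ≥ 0 and C, δ > 0 be real numbers such that N₁ ≤ C·M + δ·N₃ and δ·|λ₁|·(α₃θ−α₁)/(α₁+2) ≤ |λ₃|·α₃·(1−θ)/(2(α₃+2)). Then Y ≥ ((α₃θ − 4)/2)·G − (|λ₁|·C·(α₃θ−α₁)/(α₁+2))·M − α₃θ·E. -/

import Mathlib

/-!
Eliminating part of the potential energy with a multiple `κ E` of the conserved energy replaces the
coefficient `-αⱼ` in `Y` by `κ - αⱼ`. For `κ = α₃ θ` strictly between `4` and `α₃` the focusing top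
power then contributes positively, and this gain absorbs the part `δ N₃` of the lowest power left by
interpolation, so that only a multiple of the conserved mass remains.
-/

section PowerNonlinearities

open Finset

variable {ι 𝕜 : Type*} [Fintype ι] [Field 𝕜]

/-- The energy `E` of an NLS with finitely many power nonlinearities `l j * |u| ^ α j * u`. Here `G`
stands for `‖u_x‖²` in `L²`, and `N j` for the `L^(α j + 2)` norm of `u` raised to `α j + 2`. -/
def nlsEnergy (G : 𝕜) (l α N : ι → 𝕜) : 𝕜 :=
  G / 2 + ∑ j, l j * N j / (α j + 2)

/-- The virial quantity `Y` of the same equation, normalized by `V_tt = -4 Y` for the variance `V`;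
the arguments are those of `nlsEnergy`. -/
def nlsVirial (G : 𝕜) (l α N : ι → 𝕜) : 𝕜 :=
  -2 * G - ∑ j, l j * α j * N j / (α j + 2)

theorem nlsEnergy_fin_three (G l₁ l₂ l₃ α₁ α₂ α₃ N₁ N₂ N₃ : 𝕜) :
    nlsEnergy G ![l₁, l₂, l₃] ![α₁, α₂, α₃] ![N₁, N₂, N₃] =
      G / 2 + l₁ * N₁ / (α₁ + 2) + l₂ * N₂ / (α₂ + 2) + l₃ * N₃ / (α₃ + 2) := by
  simp [nlsEnergy, Fin.sum_univ_three, add_assoc]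

theorem nlsVirial_fin_three (G l₁ l₂ l₃ α₁ α₂ α₃ N₁ N₂ N₃ : 𝕜) :
    nlsVirial G ![l₁, l₂, l₃] ![α₁, α₂, α₃] ![N₁, N₂, N₃] =
      -2 * G - l₁ * α₁ * N₁ / (α₁ + 2) - l₂ * α₂ * N₂ / (α₂ + 2) - l₃ * α₃ * N₃ / (α₃ + 2) := by
  simp [nlsVirial, Fin.sum_univ_three, sub_sub, add_assoc]

theorem nlsVirial_eq_sub_mul_nlsEnergy [CharZero 𝕜] (κ G : 𝕜) (l α N : ι → 𝕜) :
    nlsVirial G l α N =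
      (κ - 4) / 2 * G + ∑ j, l j * (κ - α j) / (α j + 2) * N j - κ * nlsEnergy G l α N := by
  have hsum : ∑ j, l j * (κ - α j) / (α j + 2) * N j =
      κ * ∑ j, l j * N j / (α j + 2) - ∑ j, l j * α j * N j / (α j + 2) := by
    rw [mul_sum, ← sum_sub_distrib]
    exact sum_congr rfl fun j _ ↦ by ring
  rw [nlsVirial, nlsEnergy, hsum]
  ring

variable [LinearOrder 𝕜] [IsStrictOrderedRing 𝕜]

theorem neg_abs_mul_le_add_of_le_add {a b x y m δ : 𝕜} (hx : 0 ≤ x) (hy : 0 ≤ y)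
    (hxy : x ≤ m + δ * y) (hab : δ * |a| ≤ b) : -(|a| * m) ≤ a * x + b * y := by
  have hlow : -(|a| * x) ≤ a * x := by
    rw [← neg_mul]
    exact mul_le_mul_of_nonneg_right (neg_abs_le a) hx
  have hinterp : |a| * x ≤ |a| * (m + δ * y) := mul_le_mul_of_nonneg_left hxy (abs_nonneg a)
  have habsorb : δ * |a| * y ≤ b * y := mul_le_mul_of_nonneg_right hab hy
  linarith

theorem abs_mul_div_two_mul_le {l α θ : 𝕜} (hl : l ≤ 0) (hα : 0 ≤ α) (hθ : θ ≤ 1) :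
    |l| * α * (1 - θ) / (2 * (α + 2)) ≤ l * (α * θ - α) / (α + 2) := by
  have hgain : l * (α * θ - α) / (α + 2) = |l| * α * (1 - θ) / (α + 2) := by
    rw [abs_of_nonpos hl]
    ring
  have hnonneg : 0 ≤ |l| * α * (1 - θ) :=
    mul_nonneg (mul_nonneg (abs_nonneg l) hα) (sub_nonneg.mpr hθ)
  rw [hgain]
  exact div_le_div_of_nonneg_left hnonneg (by linarith) (by linarith)

theorem virial_case4C_general {l α N : ι → 𝕜} {low top : ι} (hne : low ≠ top) {G κ M C δ : 𝕜}
    (hα : ∀ j, -2 < α j) (hακ : ∀ j ≠ top, α j ≤ κ) (hN : ∀ j, 0 ≤ N j)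
    (hl : ∀ j, j ≠ low → j ≠ top → 0 ≤ l j) (hinterp : N low ≤ C * M + δ * N top)
    (hδ : δ * |l low| * (κ - α low) / (α low + 2) ≤ l top * (κ - α top) / (α top + 2)) :
    (κ - 4) / 2 * G - |l low| * C * (κ - α low) / (α low + 2) * M - κ * nlsEnergy G l α N ≤
      nlsVirial G l α N := by
  classical
  let c (j : ι) : 𝕜 := l j * (κ - α j) / (α j + 2)
  have hα₂ (j : ι) : 0 < α j + 2 := neg_lt_iff_pos_add.mp (hα j)
  have hgap (j : ι) (hj : j ≠ top) : 0 ≤ κ - α j := sub_nonneg.mpr (hακ j hj)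
  have habs : |c low| = |l low| * (κ - α low) / (α low + 2) := by
    rw [abs_div, abs_mul, abs_of_nonneg (hgap low hne), abs_of_pos (hα₂ low)]
  have hpair : c low * N low + c top * N top ≤ ∑ j, c j * N j := by
    rw [← sum_pair (f := fun j ↦ c j * N j) hne]
    refine sum_le_sum_of_subset_of_nonneg (subset_univ _) fun j _ hj ↦ ?_
    obtain ⟨hlow, htop⟩ : j ≠ low ∧ j ≠ top := by simpa using hj
    exact mul_nonneg (div_nonneg (mul_nonneg (hl j hlow htop) (hgap j htop)) (hα₂ j).le) (hN j)
  have habsorb : -(|c low| * (C * M)) ≤ c low * N low + c top * N top :=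
    neg_abs_mul_le_add_of_le_add (hN low) (hN top) hinterp <| by
      rwa [habs, ← mul_div_assoc, ← mul_assoc]
  have hmass : |l low| * C * (κ - α low) / (α low + 2) * M = |c low| * (C * M) := by
    rw [habs]
    ring
  rw [nlsVirial_eq_sub_mul_nlsEnergy κ, hmass]
  linarith

end PowerNonlinearities

theorem virial_case4C
    (G N₁ N₂ N₃ : ℝ) (hG : 0 ≤ G) (hN₁ : 0 ≤ N₁) (hN₂ : 0 ≤ N₂) (hN₃ : 0 ≤ N₃)
    (l₁ l₂ l₃ : ℝ) (hl₃ : l₃ < 0)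
    (α₁ α₂ α₃ : ℝ) (hα₁ : 0 < α₁) (h₁₂ : α₁ < α₂) (h₂₃ : α₂ < α₃)
    (E Y : ℝ)
    (hE : E = G / 2 + l₁ * N₁ / (α₁ + 2) + l₂ * N₂ / (α₂ + 2) + l₃ * N₃ / (α₃ + 2))
    (hY : Y = -2 * G - l₁ * α₁ * N₁ / (α₁ + 2) - l₂ * α₂ * N₂ / (α₂ + 2) - l₃ * α₃ * N₃ / (α₃ + 2))
    (hl₁ : l₁ < 0) (hl₂ : 0 < l₂) (hα₂4 : α₂ < 4) (h4α₃ : 4 < α₃)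
    (θ : ℝ) (hθ₁ : 4 / α₃ < θ) (hθ₂ : θ < 1)
    (M C δ : ℝ) (hM : 0 ≤ M) (hC : 0 < C) (hδ : 0 < δ)
    (hinterp : N₁ ≤ C * M + δ * N₃)
    (hδsmall : δ * |l₁| * (α₃ * θ - α₁) / (α₁ + 2) ≤ |l₃| * α₃ * (1 - θ) / (2 * (α₃ + 2))) :
    Y ≥ ((α₃ * θ - 4) / 2) * G - (|l₁| * C * (α₃ * θ - α₁) / (α₁ + 2)) * M - α₃ * θ * E := by
  have hκ : 4 < α₃ * θ := (div_lt_iff₀' (by linarith)).mp hθ₁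
  have hgain := hδsmall.trans (abs_mul_div_two_mul_le hl₃.le (by linarith) hθ₂.le)
  have hα : ∀ j, -2 < ![α₁, α₂, α₃] j := fun j ↦ by fin_cases j <;> simp <;> linarith
  have hακ : ∀ j ≠ 2, ![α₁, α₂, α₃] j ≤ α₃ * θ := fun j hj ↦ by
    fin_cases j <;> simp at hj ⊢ <;> linarith
  have hN : ∀ j, 0 ≤ ![N₁, N₂, N₃] j := fun j ↦ by fin_cases j <;> assumption
  have hl : ∀ j, j ≠ 0 → j ≠ 2 → 0 ≤ ![l₁, l₂, l₃] j := fun j h₀ h₂ ↦ by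
    fin_cases j <;> simp_all [hl₂.le]
  rw [hE, hY, ← nlsEnergy_fin_three, ← nlsVirial_fin_three]
  exact virial_case4C_general (low := 0) (top := 2) (by decide) hα hακ hN hl hinterp hgain
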